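/- arXiv:1808.01268 — 2 statements merged into one kernel-verified Lean document; each statement's English description precedes it below -/
import Mathlib

section
/- Every reflection factorization of a Coxeter element of G5 of length at least five has, in its Hurwitz orbit, a reflection factorization with two consecutive equal entries. -/
noncomputable section

open Matrix Complex

/-- The `i`-th Hurwitz move on length-`k` tuples of group elements. -/
def IsHurwitzMove {G : Type*} [Group G] {k : ℕ} (t t' : Fin k → G) : Prop :=
  ∃ i : ℕ, ∃ h : i + 1 < k,
    t' ⟨i, Nat.lt_of_succ_lt h⟩ = t ⟨i + 1, h⟩ ∧
    t' ⟨i + 1, h⟩ = (t ⟨i + 1, h⟩)⁻¹ * t ⟨i, Nat.lt_of_succ_lt h⟩ * t ⟨i + 1, h⟩ ∧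
    ∀ j : Fin k, (j : ℕ) ≠ i → (j : ℕ) ≠ i + 1 → t' j = t j

/-- Two tuples lie in the same Hurwitz orbit. -/
def SameHurwitzOrbit {G : Type*} [Group G] {k : ℕ} (t t' : Fin k → G) : Prop :=
  Relation.EqvGen IsHurwitzMove t t'

/-- A group element `r` appears (as an entry) in the Hurwitz orbit of the tuple `t`. -/
def Appears {G : Type*} [Group G] {k : ℕ} (r : G) (t : Fin k → G) : Prop :=
  ∃ s : Fin k → G, SameHurwitzOrbit t s ∧ ∃ j, s j = r

/-- A tuple has two consecutive equal entries. -/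
def HasConsecutiveEqualPair {G : Type*} [Group G] {k : ℕ} (t : Fin k → G) : Prop :=
  ∃ i : ℕ, ∃ h : i + 1 < k, t ⟨i, Nat.lt_of_succ_lt h⟩ = t ⟨i + 1, h⟩

/-- Replace the `p`-th entry of a tuple by two consecutive copies of its square. -/
def doubleAt {G : Type*} [Group G] {m : ℕ} (t : Fin m → G) (p : Fin m) : Fin (m + 1) → G :=
  fun j =>
    if h1 : (j : ℕ) < (p : ℕ) then t ⟨j, h1.trans p.isLt⟩
    else if h2 : (j : ℕ) ≤ (p : ℕ) + 1 then (t p) ^ 2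
    else t ⟨(j : ℕ) - 1, by have := j.isLt; omega⟩

/-- `ω = e^(2πi/3)`. -/
def ω : ℂ := Complex.exp (2 * Real.pi * Complex.I / 3)

def AMat : Matrix (Fin 2) (Fin 2) ℂ := !![1, 0; 0, ω]

def BMat : Matrix (Fin 2) (Fin 2) ℂ :=
  !![(ω - ω ^ 2) / 3, ω ^ 2; (-2 * ω ^ 2) / 3, (-ω - 2 * ω ^ 2) / 3]

/-- The complex reflection group G₄ as the subgroup of GL(2,ℂ) generated by `AMat`, `BMat`. -/
def G4 : Subgroup (GL (Fin 2) ℂ) :=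
  Subgroup.closure {g : GL (Fin 2) ℂ |
    (g : Matrix (Fin 2) (Fin 2) ℂ) = AMat ∨ (g : Matrix (Fin 2) (Fin 2) ℂ) = BMat}

/-- The matrix underlying an element of G₄. -/
def mat (t : G4) : Matrix (Fin 2) (Fin 2) ℂ := ((t : GL (Fin 2) ℂ) : Matrix (Fin 2) (Fin 2) ℂ)

/-- A reflection in G₄: a non-identity element with eigenvalue 1. -/
def IsReflection (t : G4) : Prop := t ≠ 1 ∧ (mat t - 1).det = 0

/-- The conjugacy class R₁ of reflections of determinant ω. -/
def R1 : Set G4 := {t | IsReflection t ∧ (mat t).det = ω}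

/-- The conjugacy class R₂ of reflections of determinant ω². -/
def R2 : Set G4 := {t | IsReflection t ∧ (mat t).det = ω ^ 2}

/-- A Coxeter element of G₄: an element with a primitive 6th root of unity as eigenvalue. -/
def IsCoxeter (c : G4) : Prop :=
  ∃ ζ : ℂ, IsPrimitiveRoot ζ 6 ∧ (mat c - ζ • (1 : Matrix (Fin 2) (Fin 2) ℂ)).det = 0

/-- The relators of G₅: a³, b³, abab(baba)⁻¹. -/
def g5Rels : Set (FreeGroup (Fin 2)) :=
  {FreeGroup.of 0 ^ 3, FreeGroup.of 1 ^ 3,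
    FreeGroup.of 0 * FreeGroup.of 1 * FreeGroup.of 0 * FreeGroup.of 1 *
      (FreeGroup.of 1 * FreeGroup.of 0 * FreeGroup.of 1 * FreeGroup.of 0)⁻¹}

/-- The complex reflection group G₅, by its presentation ⟨a,b | a³ = b³ = 1, abab = baba⟩. -/
abbrev G5 := PresentedGroup g5Rels

def ga : G5 := PresentedGroup.of 0
def gb : G5 := PresentedGroup.of 1

/-- The conjugacy class of `a` in G₅. -/
def S1 : Set G5 := {t | IsConj ga t}
/-- The conjugacy class of `b` in G₅. -/
def S2 : Set G5 := {t | IsConj gb t}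
/-- The conjugacy class of `a²` in G₅. -/
def S3 : Set G5 := {t | IsConj (ga ^ 2) t}
/-- The conjugacy class of `b²` in G₅. -/
def S4 : Set G5 := {t | IsConj (gb ^ 2) t}

/-- A reflection in G₅: a conjugate of a, b, a², or b². -/
def IsReflection5 (t : G5) : Prop := t ∈ S1 ∨ t ∈ S2 ∨ t ∈ S3 ∨ t ∈ S4

/-- A Coxeter element of G₅: an element of order 12. -/
def IsCoxeter5 (c : G5) : Prop := orderOf c = 12

/-!
Up to central factors, every reflection of `G₅` is `X_v` or `X_v⁻¹`, where the four elements `X_v`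
are indexed by the vertices `v` of a tetrahedron. A reflection is thus given by its class, one of
four, and a vertex; conjugation by it keeps classes and rotates the tetrahedron about its vertex, in
a sense that depends only on its class.

Call a word pair-free if no word of its Hurwitz orbit has two equal consecutive letters. Letters can
be moved to the front of a word unchanged, so sublists of a pair-free word are pair-free. Of five
reflections two, say `x` and `y`, have the same class; move them to the front and let `m` be the
vertex fixed by `x * y`. If `[x, y, g]` is pair-free, then `g` turns in the same sense as `x` if and
only if it sits at `m`. From this, if `[x, y, g, h]` is pair-free, then `g` and `h` both turn
against `x`, their vertices differ, and the vertex of `h` is that of `g` rotated about `m`. Hence in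
a pair-free word `[x, y, g, h, k]` the letters `h` and `k` would sit at the same vertex, whereas
pair-freeness of `[x, y, h, k]` makes their vertices differ.
-/

open Equiv List
open scoped Quandles

section Hurwitz

theorem eqvGen_map {α β : Type*} {r : α → α → Prop} {s : β → β → Prop} (f : α → β)
    (hf : ∀ a b, r a b → s (f a) (f b)) {a b : α} (h : Relation.EqvGen r a b) :
    Relation.EqvGen s (f a) (f b) :=
  Quot.eqvGen_exact (congrArg (Quot.map f hf) (Quot.eqvGen_sound h))

variable {R : Type*} [Rack R]

/-- A Hurwitz move on words in a rack: two consecutive letters `x, y` become `y, y ◃⁻¹ x`.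
In the conjugation quandle of a group, `y ◃⁻¹ x = y⁻¹ * x * y`. -/
inductive HurwitzStep : List R → List R → Prop
  | mk (p : List R) (x y : R) (q : List R) :
      HurwitzStep (p ++ x :: y :: q) (p ++ y :: (y ◃⁻¹ x) :: q)

/-- Two words in a rack lie in the same Hurwitz orbit. -/
def HurwitzEquiv : List R → List R → Prop := Relation.EqvGen HurwitzStep

/-- No word in the Hurwitz orbit of `L` has two consecutive equal letters. -/
def PairFree (L : List R) : Prop := ∀ L', HurwitzEquiv L L' → L'.IsChain (· ≠ ·)

namespace HurwitzEquiv

variable {L L' L'' : List R}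

theorem trans (h : HurwitzEquiv L L') (h' : HurwitzEquiv L' L'') : HurwitzEquiv L L'' :=
  Relation.EqvGen.trans _ _ _ h h'

theorem move (p : List R) (x y : R) (q : List R) :
    HurwitzEquiv (p ++ x :: y :: q) (p ++ y :: (y ◃⁻¹ x) :: q) :=
  .rel _ _ ⟨p, x, y, q⟩

theorem move_inv (p : List R) (x y : R) (q : List R) :
    HurwitzEquiv (p ++ x :: y :: q) (p ++ (x ◃ y) :: x :: q) := by
  have h := Relation.EqvGen.symm _ _ (move p (x ◃ y) x q)
  rwa [Rack.invAct_act_eq] at h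

theorem cons (a : R) (h : HurwitzEquiv L L') : HurwitzEquiv (a :: L) (a :: L') :=
  eqvGen_map (a :: ·) (fun _ _ ⟨p, x, y, q⟩ ↦ ⟨a :: p, x, y, q⟩) h

theorem append_right (h : HurwitzEquiv L L') (q : List R) : HurwitzEquiv (L ++ q) (L' ++ q) :=
  eqvGen_map (· ++ q)
    (fun _ _ ⟨p, x, y, q'⟩ ↦ by simpa using HurwitzStep.mk p x y (q' ++ q)) h

theorem map {S : Type*} [Rack S] (f : R →◃ S) (h : HurwitzEquiv L L') :
    HurwitzEquiv (L.map f) (L'.map f) := by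
  have map_invAct (y x : R) : f (y ◃⁻¹ x) = f y ◃⁻¹ f x := by
    rw [← Rack.left_cancel (f y), ← f.map_act, Rack.act_invAct_eq, Rack.act_invAct_eq]
  refine eqvGen_map (List.map f) (fun _ _ ⟨p, x, y, q⟩ ↦ ?_) h
  simpa [map_invAct] using HurwitzStep.mk (p.map f) (f x) (f y) (q.map f)

theorem length_eq (h : HurwitzEquiv L L') : L.length = L'.length :=
  (eq_equivalence.comap List.length).eqvGen_iff.mp <|
    Relation.EqvGen.mono (fun _ _ ⟨_, _, _, _⟩ ↦ by simp [Function.onFun]) _ _ h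

theorem exists_cons_append (a : R) (L : List R) :
    ∃ a', HurwitzEquiv (a :: L) (L ++ [a']) := by
  induction L generalizing a with
  | nil => exact ⟨a, .refl _⟩
  | cons s L ih =>
    obtain ⟨a', h⟩ := ih (s ◃⁻¹ a)
    exact ⟨a', (move [] a s L).trans (h.cons s)⟩

theorem exists_append_of_sublist {S L : List R} (h : S <+ L) : ∃ T, HurwitzEquiv L (S ++ T) := by
  induction h with
  | slnil => exact ⟨[], .refl _⟩
  | @cons S L a _ ih =>
    obtain ⟨T, hT⟩ := ih
    obtain ⟨a', ha'⟩ := exists_cons_append a S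
    exact ⟨a' :: T, (hT.cons a).trans <| by simpa using ha'.append_right T⟩
  | cons_cons a _ ih =>
    obtain ⟨T, hT⟩ := ih
    exact ⟨T, hT.cons a⟩

end HurwitzEquiv

namespace PairFree

variable {L L' : List R}

theorem of_equiv (h : PairFree L) (e : HurwitzEquiv L L') : PairFree L' :=
  fun L'' e' ↦ h L'' (e.trans e')

theorem sublist (h : PairFree L) {S : List R} (hS : S <+ L) : PairFree S := fun S' e ↦ by
  obtain ⟨T, hT⟩ := HurwitzEquiv.exists_append_of_sublist hS
  exact (h _ (hT.trans (e.append_right T))).left_of_append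

theorem ne {x y : R} (h : PairFree [x, y]) : x ≠ y := by
  simpa using h [x, y] (.refl _)

theorem of_map {S : Type*} [Rack S] (f : R →◃ S) (h : PairFree (L.map f)) : PairFree L :=
  fun _ e ↦ ((List.isChain_map f).mp (h _ (e.map f))).imp fun _ _ ↦ mt (congrArg f)

theorem move_head {x y : R} {q : List R} (h : PairFree (x :: y :: q)) :
    PairFree (y :: (y ◃⁻¹ x) :: q) :=
  h.of_equiv (.move [] x y q)

theorem conj_second {x y g : R} {q : List R} (h : PairFree (x :: y :: g :: q)) :
    PairFree (x :: (g ◃⁻¹ y) :: q) :=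
  (h.of_equiv (.move [x] y g q)).sublist (by simp)

end PairFree

end Hurwitz

section Tetrahedron

/-- The rotation of order three of the tetrahedron with vertices `Fin 4` about a given vertex.
All four have the same orientation: they form a conjugacy class of the alternating group. -/
def vertexRotation : Fin 4 → Perm (Fin 4) := ![c[1, 2, 3], c[0, 3, 2], c[0, 1, 3], c[0, 2, 1]]

/-- The rotation of the tetrahedron about a vertex in the sense of rotation given by a sign. -/
def signedRotation (ε : ℤˣ) (v : Fin 4) : Perm (Fin 4) := vertexRotation v ^ (ε : ℤ)

theorem vertexRotation_signedRotation : ∀ (ε : ℤˣ) (v w : Fin 4),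
    vertexRotation (signedRotation ε v w) =
      signedRotation ε v * vertexRotation w * (signedRotation ε v)⁻¹ := by decide

theorem signedRotation_apply_eq_self_iff : ∀ {ε : ℤˣ} {v w : Fin 4},
    signedRotation ε v w = w ↔ w = v := by decide

theorem signedRotation_inv_apply_eq_self_iff {ε : ℤˣ} {v w : Fin 4} :
    (signedRotation ε v)⁻¹ w = w ↔ w = v := by
  rw [Perm.inv_eq_iff_eq, eq_comm, signedRotation_apply_eq_self_iff]

/-- For `x ≠ y`, the vertex fixed by the product of the signed rotations about `x` and `y`.
The four vertices are then `x`, `y`, `oppositeVertex ε x y` and `oppositeVertex ε y x`. -/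
def oppositeVertex (ε : ℤˣ) (x y : Fin 4) : Fin 4 := (signedRotation ε x)⁻¹ y

-- Hurwitz moves on two letters of the same class, at the vertices `x` and `y`, lead to the vertices
-- `y` and `oppositeVertex ε y x`, then to `oppositeVertex ε y x` and `x`, then back to `x` and `y`.
theorem sign_eq_iff_eq_oppositeVertex : ∀ {ε δ : ℤˣ} {x y u : Fin 4}, x ≠ y →
    x ≠ (signedRotation δ u)⁻¹ y →
    y ≠ (signedRotation δ u)⁻¹ (oppositeVertex ε y x) →
    oppositeVertex ε y x ≠ (signedRotation δ u)⁻¹ x →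
    (δ = ε ↔ u = oppositeVertex ε x y) := by
  decide +kernel

theorem oppositeVertex_ne_oppositeVertex_rotated : ∀ {ε : ℤˣ} {x y : Fin 4}, x ≠ y →
    oppositeVertex ε x y ≠
      oppositeVertex ε x ((signedRotation ε (oppositeVertex ε x y))⁻¹ y) := by
  decide +kernel

theorem eq_oppositeVertex_rotated_of_ne : ∀ {ε : ℤˣ} {x y u : Fin 4}, x ≠ y →
    u ≠ oppositeVertex ε x y →
    u = oppositeVertex ε x ((signedRotation (-ε) u)⁻¹ y) ∨
    u = oppositeVertex ε y ((signedRotation (-ε) u)⁻¹ (oppositeVertex ε y x)) ∨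
    u = oppositeVertex ε (oppositeVertex ε y x) ((signedRotation (-ε) u)⁻¹ x) := by
  decide +kernel

theorem eq_signedRotation_of_ne : ∀ {ε : ℤˣ} {m u v : Fin 4}, u ≠ m → v ≠ m → u ≠ v →
    signedRotation (-ε) u v ≠ m → v = signedRotation ε m u := by
  decide +kernel

theorem oppositeVertex_oppositeVertex : ∀ (ε : ℤˣ) (x y : Fin 4),
    oppositeVertex ε (oppositeVertex ε y x) y = x := by
  decide

/-- A vertex of the tetrahedron with a colour; `sgn` gives each colour a sense of rotation. -/
@[ext]
structure ColoredVertex {C : Type*} (sgn : C → ℤˣ) where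
  color : C
  vertex : Fin 4

namespace ColoredVertex

variable {C : Type*} {sgn : C → ℤˣ}

instance : Rack (ColoredVertex sgn) where
  act p q := ⟨q.color, signedRotation (sgn p.color) p.vertex q.vertex⟩
  invAct p q := ⟨q.color, (signedRotation (sgn p.color) p.vertex)⁻¹ q.vertex⟩
  self_distrib {p q r} := by
    congr 1
    simp only [signedRotation.eq_def _ (signedRotation _ _ _), vertexRotation_signedRotation,
      conj_zpow]
    simp [signedRotation]
  left_inv p q := by simp
  right_inv p q := by simp

variable {x y : ColoredVertex sgn}

theorem invAct_invAct_of_color_eq (hc : x.color = y.color) : (y ◃⁻¹ x) ◃⁻¹ y = x := by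
  obtain ⟨c, v⟩ := x
  obtain ⟨_, w⟩ := y
  obtain rfl : c = _ := hc
  exact ColoredVertex.ext rfl (oppositeVertex_oppositeVertex (sgn c) v w)

theorem invAct_vertex_of_color_eq (hc : x.color = y.color) :
    (y ◃⁻¹ x).vertex = oppositeVertex (sgn x.color) y.vertex x.vertex := by
  rw [hc]; rfl

end ColoredVertex

namespace PairFree

variable {C : Type*} {sgn : C → ℤˣ} {x y g h k : ColoredVertex sgn}

theorem vertex_ne (hp : PairFree [x, y]) (hc : x.color = y.color) : x.vertex ≠ y.vertex :=
  fun hv ↦ hp.ne (ColoredVertex.ext hc hv)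

theorem move_head_twice {q : List (ColoredVertex sgn)} (hp : PairFree (x :: y :: q))
    (hc : x.color = y.color) : PairFree ((y ◃⁻¹ x) :: x :: q) := by
  simpa only [ColoredVertex.invAct_invAct_of_color_eq hc] using hp.move_head.move_head

theorem sgn_eq_iff (hp : PairFree [x, y, g]) (hc : x.color = y.color) :
    sgn g.color = sgn x.color ↔ g.vertex = oppositeVertex (sgn x.color) x.vertex y.vertex := by
  have fixed := ColoredVertex.invAct_vertex_of_color_eq hc
  refine sign_eq_iff_eq_oppositeVertex ((hp.sublist (by simp)).vertex_ne hc)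
    (hp.conj_second.vertex_ne hc) ?_ ?_ <;> rw [← fixed]
  · exact hp.move_head.conj_second.vertex_ne hc.symm
  · exact (hp.move_head_twice hc).conj_second.vertex_ne rfl

theorem sgn_third_ne (hp : PairFree [x, y, g, h]) (hc : x.color = y.color) :
    sgn g.color ≠ sgn x.color := by
  intro hg
  have hx : x.vertex ≠ y.vertex := (hp.sublist (by simp)).vertex_ne hc
  have g_opp : g.vertex = oppositeVertex _ x.vertex y.vertex :=
    ((hp.sublist (by simp)).sgn_eq_iff hc).mp hg
  have moved_opp : (h ◃⁻¹ g).vertex = oppositeVertex _ x.vertex y.vertex :=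
    (((hp.of_equiv (.move [x, y] g h [])).sublist (by simp)).sgn_eq_iff hc).mp hg
  have g_eq_h : g.vertex = h.vertex :=
    signedRotation_inv_apply_eq_self_iff.mp (moved_opp.trans g_opp.symm)
  have hh : sgn h.color = sgn x.color :=
    ((hp.sublist (by simp)).sgn_eq_iff hc).mpr (g_eq_h ▸ g_opp)
  have h_opp : h.vertex = oppositeVertex _ _ ((signedRotation _ g.vertex)⁻¹ y.vertex) :=
    (hp.conj_second.sgn_eq_iff hc).mp hh
  rw [hg, ← g_eq_h, g_opp] at h_opp
  exact oppositeVertex_ne_oppositeVertex_rotated hx h_opp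

theorem sgn_fourth_ne (hp : PairFree [x, y, g, h]) (hc : x.color = y.color) :
    sgn h.color ≠ sgn x.color :=
  (hp.of_equiv (.move [x, y] g h [])).sgn_third_ne hc

theorem vertex_third_ne_fourth (hp : PairFree [x, y, g, h]) (hc : x.color = y.color) :
    g.vertex ≠ h.vertex := by
  intro hv
  have hg : sgn g.color = -sgn x.color := Int.units_ne_iff_eq_neg.mp (hp.sgn_third_ne hc)
  have hh : sgn h.color ≠ sgn x.color := hp.sgn_fourth_ne hc
  have conj_vertex (q : ColoredVertex sgn) :
      (g ◃⁻¹ q).vertex = (signedRotation (-sgn x.color) h.vertex)⁻¹ q.vertex := by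
    rw [← hg, ← hv]; rfl
  have opp_vertex := ColoredVertex.invAct_vertex_of_color_eq hc
  have h_ne := mt ((hp.sublist (by simp)).sgn_eq_iff hc).mpr hh
  have h_ne₁ := mt (hp.conj_second.sgn_eq_iff hc).mpr hh
  have h_ne₂ := mt (hp.move_head.conj_second.sgn_eq_iff hc.symm).mpr (hc ▸ hh)
  have h_ne₃ := mt ((hp.move_head_twice hc).conj_second.sgn_eq_iff rfl).mpr hh
  rw [conj_vertex] at h_ne₁
  rw [conj_vertex, opp_vertex, ← hc] at h_ne₂
  rw [conj_vertex, opp_vertex] at h_ne₃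
  have hx : x.vertex ≠ y.vertex := (hp.sublist (by simp)).vertex_ne hc
  rcases eq_oppositeVertex_rotated_of_ne hx h_ne with h_eq | h_eq | h_eq
  exacts [h_ne₁ h_eq, h_ne₂ h_eq, h_ne₃ h_eq]

theorem vertex_fourth_eq (hp : PairFree [x, y, g, h]) (hc : x.color = y.color) :
    h.vertex = signedRotation (sgn x.color)
      (oppositeVertex (sgn x.color) x.vertex y.vertex) g.vertex := by
  have hg : sgn g.color ≠ sgn x.color := hp.sgn_third_ne hc
  have hh : sgn h.color ≠ sgn x.color := hp.sgn_fourth_ne hc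
  refine eq_signedRotation_of_ne (mt ((hp.sublist (by simp)).sgn_eq_iff hc).mpr hg)
    (mt ((hp.sublist (by simp)).sgn_eq_iff hc).mpr hh) (hp.vertex_third_ne_fourth hc) ?_
  rw [← Int.units_ne_iff_eq_neg.mp hg]
  exact mt (((hp.of_equiv (.move_inv [x, y] g h [])).sublist
    (S := [x, y, g ◃ h]) (by simp)).sgn_eq_iff hc).mpr hh

theorem color_ne (hp : PairFree [x, y, g, h, k]) : x.color ≠ y.color := by
  intro hc
  have h_eq := (hp.sublist (S := [x, y, g, h]) (by simp)).vertex_fourth_eq hc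
  have k_eq := (hp.sublist (S := [x, y, g, k]) (by simp)).vertex_fourth_eq hc
  exact (hp.sublist (S := [x, y, h, k]) (by simp)).vertex_third_ne_fourth hc
    (h_eq.trans k_eq.symm)

theorem nodup_map_color {L : List (ColoredVertex sgn)} (hp : PairFree L) (hL : 5 ≤ L.length) :
    (L.map ColoredVertex.color).Nodup := by
  rw [List.Nodup, List.pairwise_map, List.pairwise_iff_forall_sublist]
  intro x y hxy
  obtain ⟨T, hT⟩ := HurwitzEquiv.exists_append_of_sublist hxy
  have hlen := hT.length_eq
  match T with
  | g :: h :: k :: T => exact ((hp.of_equiv hT).sublist (S := [x, y, g, h, k]) (by simp)).color_ne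
  | [] | [_] | [_, _] =>
    simp only [length_append, length_cons, length_nil] at hlen
    omega

end PairFree

end Tetrahedron

section Group

variable {G : Type*} [Group G]

/-- The pairs of a group element and a permutation of the index set such that conjugation by the
former permutes the family `X` as the latter. -/
def conjGraph {ι : Type*} (X : ι → G) : Subgroup (G × Perm ι) where
  carrier := {p | ∀ i, SemiconjBy p.1 (X i) (X (p.2 i))}
  one_mem' i := SemiconjBy.one_left (X i)
  mul_mem' {p q} hp hq i := (hp (q.2 i)).mul_left (hq i)
  inv_mem' {p} hp i := by simpa using (hp (p.2⁻¹ i)).inv_symm_left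

/-- The elements `a` and `b` generate their group and satisfy the defining relations of `G₅`. -/
structure IsG5Pair (a b : G) : Prop where
  pow_three_left : a ^ 3 = 1
  pow_three_right : b ^ 3 = 1
  braid : a * b * a * b = b * a * b * a
  closure_eq_top : Subgroup.closure {a, b} = ⊤

/-- The conjugacy class of `a` in `G₅`, indexed by the vertices of the tetrahedron so that
conjugation is given by `vertexRotation`. -/
def vertexReflection (a b : G) : Fin 4 → G :=
  ![a, b * a * b⁻¹, b⁻¹ * a * b, (a * b * a * b) ^ 2 * b⁻¹]

/-- The classes of reflections of `G₅`: `(0, ε)` is the class of `a ^ ε`, `(1, ε)` that of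
`b ^ ε`. -/
abbrev ReflectionClass : Type := Fin 2 × ℤˣ

/-- The sign is such that a reflection of class `c` at the vertex `v` acts on the vertices as
`signedRotation c.sgn v`; note that `b` is a central multiple of a conjugate of `a⁻¹`. -/
def ReflectionClass.sgn (c : ReflectionClass) : ℤˣ := ![1, -1] c.1 * c.2

/-- The reflection of `G₅` of given class and vertex. Since `(abab)²` is central and
`vertexReflection a b 3` is `(abab)² b⁻¹`, the elements `(abab)² (vertexReflection a b v)⁻¹` form
the conjugacy class of `b`. -/
def reflection (a b : G) (p : ColoredVertex ReflectionClass.sgn) : G :=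
  ![vertexReflection a b p.vertex,
    (a * b * a * b) ^ 2 * (vertexReflection a b p.vertex)⁻¹] p.color.1 ^ (p.color.2 : ℤ)

namespace IsG5Pair

variable {a b : G}

theorem inv_left (h : IsG5Pair a b) : a⁻¹ = a * a :=
  inv_eq_of_mul_eq_one_left (by rw [← h.pow_three_left, pow_succ, pow_two])

theorem inv_right (h : IsG5Pair a b) : b⁻¹ = b * b :=
  inv_eq_of_mul_eq_one_left (by rw [← h.pow_three_right, pow_succ, pow_two])

theorem mul_mul_mul_mem_center (h : IsG5Pair a b) : a * b * a * b ∈ Subgroup.center G := by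
  rw [← Subgroup.centralizer_univ, ← Subgroup.coe_top, ← h.closure_eq_top,
    Subgroup.centralizer_closure]
  rintro c (rfl | rfl)
  · simpa only [mul_assoc] using congrArg (c * ·) h.braid
  · simpa only [mul_assoc] using congrArg (· * c) h.braid.symm

theorem commute_mul_mul_mul_sq (h : IsG5Pair a b) (g : G) : Commute g ((a * b * a * b) ^ 2) :=
  Commute.pow_right (Subgroup.mem_center_iff.mp h.mul_mul_mul_mem_center g) 2

theorem mul_mul_mul_sq_mem_conjGraph (h : IsG5Pair a b) {ι : Type*} (X : ι → G) :
    ((a * b * a * b) ^ 2, 1) ∈ conjGraph X :=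
  fun i ↦ (h.commute_mul_mul_mul_sq (X i)).symm

theorem semiconjBy_vertexReflection_two (h : IsG5Pair a b) :
    SemiconjBy a (vertexReflection a b 2) (vertexReflection a b 3) := by
  have b_inv_sq : b⁻¹ * b⁻¹ = b := by rw [← _root_.mul_inv_rev, ← h.inv_right, inv_inv]
  calc a * (b⁻¹ * a * b)
      = a * b⁻¹ * (a * b * a * b) * b⁻¹ * a⁻¹ := by group
    _ = a * b * a * b * (a * b⁻¹) * b⁻¹ * a⁻¹ := by
        rw [Subgroup.mem_center_iff.mp h.mul_mul_mul_mem_center]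
    _ = a * b * a * b * a * (b⁻¹ * b⁻¹) * a⁻¹ := by group
    _ = a * b * a * b * a * b * (a * a) := by rw [b_inv_sq, h.inv_left]
    _ = (a * b * a * b) ^ 2 * b⁻¹ * a := by rw [pow_two]; group

theorem left_mem_conjGraph (h : IsG5Pair a b) :
    (a, vertexRotation 0) ∈ conjGraph (vertexReflection a b) := by
  have h₁ : SemiconjBy a (vertexReflection a b 1) (vertexReflection a b 2) := by
    have := congrArg (b⁻¹ * · * b⁻¹) h.braid
    simpa [vertexReflection, SemiconjBy, mul_assoc] using! this.symm
  have h₂ := h.semiconjBy_vertexReflection_two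
  have h₃ : SemiconjBy a (vertexReflection a b 3) (vertexReflection a b 1) := by
    have := (h₂.mul_left h₁).inv_symm_left
    rwa [← h.inv_left, inv_inv] at this
  intro i
  fin_cases i
  exacts [Commute.refl a, h₁, h₂, h₃]

theorem right_mem_conjGraph (h : IsG5Pair a b) :
    (b, (vertexRotation 3)⁻¹) ∈ conjGraph (vertexReflection a b) := by
  have h₀ : SemiconjBy b (vertexReflection a b 0) (vertexReflection a b 1) := by
    simp [vertexReflection, SemiconjBy]
  have h₁ : SemiconjBy b (vertexReflection a b 1) (vertexReflection a b 2) := by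
    simp [vertexReflection, SemiconjBy, h.inv_right, mul_assoc]
  have h₂ : SemiconjBy b (vertexReflection a b 2) (vertexReflection a b 0) := by
    simp [vertexReflection, SemiconjBy, mul_assoc]
  have h₃ : SemiconjBy b (vertexReflection a b 3) (vertexReflection a b 3) :=
    (h.commute_mul_mul_mul_sq b).mul_right (Commute.refl b).inv_right
  intro i
  fin_cases i
  exacts [h₀, h₁, h₂, h₃]

theorem vertexReflection_mem_conjGraph (h : IsG5Pair a b) (v : Fin 4) :
    (vertexReflection a b v, vertexRotation v) ∈ conjGraph (vertexReflection a b) := by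
  have ha := h.left_mem_conjGraph
  have hb := h.right_mem_conjGraph
  have hz := h.mul_mul_mul_sq_mem_conjGraph (vertexReflection a b)
  have rotation_one : vertexRotation 1 =
      (vertexRotation 3)⁻¹ * vertexRotation 0 * (vertexRotation 3)⁻¹⁻¹ := by decide
  have rotation_two : vertexRotation 2 =
      (vertexRotation 3)⁻¹⁻¹ * vertexRotation 0 * (vertexRotation 3)⁻¹ := by decide
  match v with
  | 0 => exact ha
  | 1 => exact rotation_one ▸ mul_mem (mul_mem hb ha) (inv_mem hb)
  | 2 => exact rotation_two ▸ mul_mem (mul_mem (inv_mem hb) ha) hb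
  | 3 => exact mul_mem hz (inv_mem hb)

theorem reflection_mem_conjGraph (h : IsG5Pair a b) (p : ColoredVertex ReflectionClass.sgn) :
    (reflection a b p, signedRotation p.color.sgn p.vertex) ∈
      conjGraph (vertexReflection a b) := by
  obtain ⟨⟨i, ε⟩, v⟩ := p
  have hv := h.vertexReflection_mem_conjGraph v
  have hz := h.mul_mul_mul_sq_mem_conjGraph (vertexReflection a b)
  match i with
  | 0 => simpa [reflection, signedRotation, ReflectionClass.sgn] using zpow_mem hv ε
  | 1 =>
    simpa [reflection, signedRotation, ReflectionClass.sgn] using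
      zpow_mem (mul_mem hz (inv_mem hv)) ε

theorem semiconjBy_reflection (h : IsG5Pair a b) {g : G} {π : Perm (Fin 4)}
    (hg : (g, π) ∈ conjGraph (vertexReflection a b)) (p : ColoredVertex ReflectionClass.sgn) :
    SemiconjBy g (reflection a b p) (reflection a b ⟨p.color, π p.vertex⟩) := by
  obtain ⟨⟨i, ε⟩, v⟩ := p
  fin_cases i
  · exact (hg v).zpow_right ε
  · exact (SemiconjBy.mul_right (h.commute_mul_mul_mul_sq g) (hg v).inv_right).zpow_right ε

/-- The reflections of `G₅`, as a map of racks from the coloured vertices. -/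
def reflectionHom (h : IsG5Pair a b) : ColoredVertex ReflectionClass.sgn →◃ Quandle.Conj G where
  toFun := reflection a b
  map_act' {p q} :=
    eq_mul_inv_of_mul_eq (h.semiconjBy_reflection (h.reflection_mem_conjGraph p) q).eq.symm

theorem exists_mem_conjGraph (h : IsG5Pair a b) (g : G) :
    ∃ π, (g, π) ∈ conjGraph (vertexReflection a b) := by
  have : Subgroup.closure {a, b} ≤ (conjGraph (vertexReflection a b)).map (.fst _ _) := by
    rw [Subgroup.closure_le]
    rintro _ (rfl | rfl)
    exacts [⟨_, h.left_mem_conjGraph, rfl⟩, ⟨_, h.right_mem_conjGraph, rfl⟩]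
  obtain ⟨⟨_, π⟩, hπ, rfl⟩ := this (h.closure_eq_top ▸ Subgroup.mem_top g)
  exact ⟨π, hπ⟩

theorem exists_reflection_eq_of_isConj (h : IsG5Pair a b) {p : ColoredVertex ReflectionClass.sgn}
    {t : G} (ht : IsConj (reflection a b p) t) : ∃ q, reflection a b q = t := by
  obtain ⟨g, rfl⟩ := isConj_iff.mp ht
  obtain ⟨π, hπ⟩ := h.exists_mem_conjGraph g
  exact ⟨_, eq_mul_inv_of_mul_eq (h.semiconjBy_reflection hπ p).eq.symm⟩

end IsG5Pair

theorem isG5Pair_ga_gb : IsG5Pair ga gb where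
  pow_three_left := PresentedGroup.one_of_mem (rels := g5Rels) (by simp [g5Rels])
  pow_three_right := PresentedGroup.one_of_mem (rels := g5Rels) (by simp [g5Rels])
  braid := mul_inv_eq_one.mp (PresentedGroup.one_of_mem (rels := g5Rels) (by simp [g5Rels]))
  closure_eq_top := by
    rw [← PresentedGroup.closure_range_of g5Rels]
    congr 1
    ext; simp [ga, gb, Fin.exists_fin_two, eq_comm]

theorem IsReflection5.exists_reflection_eq {t : G5} (ht : IsReflection5 t) :
    ∃ p, reflection ga gb p = t := by
  have h := isG5Pair_ga_gb
  have h_left (ε : ℤˣ) : reflection ga gb ⟨(0, ε), 0⟩ = ga ^ (ε : ℤ) := rfl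
  have h_right (ε : ℤˣ) : reflection ga gb ⟨(1, ε), 3⟩ = gb ^ (ε : ℤ) := by
    simp [reflection, vertexReflection, (h.commute_mul_mul_mul_sq gb).inv_right.eq]
  have conj_ga (ε : ℤˣ) (hc : IsConj (ga ^ (ε : ℤ)) t) : ∃ p, reflection ga gb p = t :=
    h.exists_reflection_eq_of_isConj (h_left ε ▸ hc)
  have conj_gb (ε : ℤˣ) (hc : IsConj (gb ^ (ε : ℤ)) t) : ∃ p, reflection ga gb p = t :=
    h.exists_reflection_eq_of_isConj (h_right ε ▸ hc)
  rcases ht with ht | ht | ht | ht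
  · exact conj_ga 1 (by rwa [Units.val_one, zpow_one])
  · exact conj_gb 1 (by rwa [Units.val_one, zpow_one])
  · have ga_inv : ga ^ ((-1 : ℤˣ) : ℤ) = ga ^ 2 := by simp [h.inv_left, pow_two]
    exact conj_ga (-1) (by rwa [ga_inv])
  · have gb_inv : gb ^ ((-1 : ℤˣ) : ℤ) = gb ^ 2 := by simp [h.inv_right, pow_two]
    exact conj_gb (-1) (by rwa [gb_inv])

end Group

section Tuples

variable {G : Type*} [Group G] {k : ℕ}

theorem HurwitzStep.isHurwitzMove {t t' : Fin k → Quandle.Conj G}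
    (h : HurwitzStep (ofFn t) (ofFn t')) : IsHurwitzMove (G := G) t t' := by
  generalize hL : ofFn t = L at h
  generalize hL' : ofFn t' = L' at h
  obtain ⟨p, x, y, q⟩ := h
  have ht (j : Fin k) : (p ++ x :: y :: q)[j.1]? = some (t j) := by simp [← hL]
  have ht' (j : Fin k) : (p ++ y :: (y ◃⁻¹ x) :: q)[j.1]? = some (t' j) := by simp [← hL']
  have hk : p.length + 1 < k := by
    have := congrArg length hL
    simp only [length_ofFn, length_append, length_cons] at this
    omega
  have t_first : t ⟨p.length, by omega⟩ = x := by simpa using (ht ⟨p.length, by omega⟩).symm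
  have t_second : t ⟨p.length + 1, hk⟩ = y := by simpa using (ht ⟨p.length + 1, hk⟩).symm
  have t'_first : t' ⟨p.length, by omega⟩ = y := by simpa using (ht' ⟨p.length, by omega⟩).symm
  have t'_second : t' ⟨p.length + 1, hk⟩ = y ◃⁻¹ x := by
    simpa using (ht' ⟨p.length + 1, hk⟩).symm
  refine ⟨p.length, hk, t'_first.trans t_second.symm, ?_, fun j hj hj' ↦ ?_⟩
  · rw [t'_second, t_first, t_second]
    rfl
  · apply Option.some_injective
    rw [← ht, ← ht']
    rcases Nat.lt_or_gt_of_ne hj with hlt | hgt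
    · rw [getElem?_append_left hlt, getElem?_append_left hlt]
    · obtain ⟨n, hn⟩ : ∃ n, j.1 = p.length + (n + 2) := ⟨j - p.length - 2, by omega⟩
      simp [hn, getElem?_append_right]

theorem HurwitzEquiv.sameHurwitzOrbit {t t' : Fin k → Quandle.Conj G}
    (h : HurwitzEquiv (ofFn t) (ofFn t')) : SameHurwitzOrbit (G := G) t t' := by
  generalize hL : ofFn t = L at h
  generalize hL' : ofFn t' = L' at h
  induction h generalizing t t' with
  | rel L L' h =>
    subst hL hL'
    exact .rel _ _ h.isHurwitzMove
  | refl => exact ofFn_injective (hL.trans hL'.symm) ▸ .refl t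
  | symm L L' _ ih => exact (ih hL' hL).symm
  | trans L M L' hLM _ ih ih' =>
    subst hL
    obtain rfl : k = M.length := by simpa using HurwitzEquiv.length_eq hLM
    exact (ih rfl (ofFn_get M)).trans _ _ _ (ih' (ofFn_get M) hL')

theorem exists_hasConsecutiveEqualPair_of_not_pairFree {t : Fin k → G}
    (h : ¬ PairFree (R := Quandle.Conj G) (ofFn t)) :
    ∃ s, SameHurwitzOrbit t s ∧ HasConsecutiveEqualPair s := by
  simp only [PairFree, not_forall] at h
  obtain ⟨L, hL, hchain⟩ := h
  obtain rfl : k = L.length := by simpa using hL.length_eq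
  rw [List.isChain_iff_getElem] at hchain
  push Not at hchain
  obtain ⟨i, hi, h_eq⟩ := hchain
  exact ⟨L.get, HurwitzEquiv.sameHurwitzOrbit (by rwa [ofFn_get]), i, hi, h_eq⟩

end Tuples

theorem g5_pair_lemma_general (k : ℕ) (hk : 5 ≤ k) (t : Fin k → G5)
    (ht : ∀ i, IsReflection5 (t i)) :
    ∃ s : Fin k → G5, SameHurwitzOrbit t s ∧ HasConsecutiveEqualPair s := by
  choose p hp using fun i ↦ (ht i).exists_reflection_eq
  refine exists_hasConsecutiveEqualPair_of_not_pairFree fun h ↦ ?_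
  have t_eq : ofFn t = (ofFn p).map isG5Pair_ga_gb.reflectionHom := by
    rw [map_ofFn]
    exact congrArg ofFn (funext fun i ↦ (hp i).symm)
  rw [t_eq] at h
  have colors_nodup := (h.of_map isG5Pair_ga_gb.reflectionHom).nodup_map_color (by simpa)
  have card_le := colors_nodup.length_le_card
  have : Fintype.card ReflectionClass = 4 := rfl
  simp only [length_map, length_ofFn] at card_le
  omega

theorem g5_pair_lemma (k : ℕ) (hk : 5 ≤ k) (c : G5) (hc : IsCoxeter5 c)
    (t : Fin k → G5) (ht : ∀ i, IsReflection5 (t i)) (hp : (List.ofFn t).prod = c) :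
    ∃ s : Fin k → G5, SameHurwitzOrbit t s ∧ HasConsecutiveEqualPair s :=
  g5_pair_lemma_general k hk t ht
end
end

section
/- Let c be a Coxeter element of G5 and let k ≤ 4. Two reflection factorizations (t₁,…,t_k) and (t′₁,…,t′_k) of c lie in the same Hurwitz orbit if and only if they have the same multiset of conjugacy classes. -/
noncomputable section

open Matrix Complex

/-!
The group `G5` is isomorphic to `C₃ × SL₂(𝔽₃)`: the relations rewrite every element as one of
`72` words, and the target has `72` elements. The isomorphism turns a reflection into a
transvection together with an element of `C₃`, so a reflection is determined by its class and by
its axis, one of the four points of the projective line over `𝔽₃`.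

Hurwitz moves permute the classes of the entries of a tuple in every possible way, so it suffices
to compare factorizations whose classes form the same nondecreasing sequence. Comparing degrees in
the abelianization leaves twelve such sequences of length at most four. Performing a Hurwitz move
twice preserves the sequence of classes and changes only axes. For each of the twelve sequences,
these squared moves reach all axes of factorizations of the Coxeter element `(ab)^(±1)` from a
single choice. Every Coxeter element is conjugate to `ab` or its inverse.
-/

section Hurwitz

variable {G H : Type*} [Group G] [Group H]

namespace SameHurwitzOrbit

variable {k : ℕ} {t t' t'' : Fin k → G}

theorem refl (t : Fin k → G) : SameHurwitzOrbit t t := Relation.EqvGen.refl t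

theorem symm (h : SameHurwitzOrbit t t') : SameHurwitzOrbit t' t := Relation.EqvGen.symm _ _ h

theorem trans (h : SameHurwitzOrbit t t') (h' : SameHurwitzOrbit t' t'') :
    SameHurwitzOrbit t t'' :=
  Relation.EqvGen.trans _ _ _ h h'

end SameHurwitzOrbit

variable {n : ℕ}

/-- The `i`-th Hurwitz move as a function on tuples of positive length, indexed so that the
two entries it touches are `i.castSucc` and `i.succ`. -/
def hurwitzMove (i : Fin n) (t : Fin (n + 1) → G) : Fin (n + 1) → G :=
  Function.update (Function.update t i.castSucc (t i.succ))
    i.succ ((t i.succ)⁻¹ * t i.castSucc * t i.succ)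

theorem hurwitzMove_castSucc (i : Fin n) (t : Fin (n + 1) → G) :
    hurwitzMove i t i.castSucc = t i.succ := by
  simp [hurwitzMove, Function.update_of_ne i.castSucc_lt_succ.ne]

theorem hurwitzMove_succ (i : Fin n) (t : Fin (n + 1) → G) :
    hurwitzMove i t i.succ = (t i.succ)⁻¹ * t i.castSucc * t i.succ := by
  simp [hurwitzMove]

theorem hurwitzMove_of_ne {i : Fin n} {j : Fin (n + 1)} (hj : j ≠ i.castSucc) (hj' : j ≠ i.succ)
    (t : Fin (n + 1) → G) : hurwitzMove i t j = t j := by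
  simp [hurwitzMove, hj, hj']

theorem isHurwitzMove_iff_exists_eq_hurwitzMove {t t' : Fin (n + 1) → G} :
    IsHurwitzMove t t' ↔ ∃ i : Fin n, t' = hurwitzMove i t := by
  constructor
  · rintro ⟨i, hi, h_left, h_right, h_else⟩
    let p : Fin n := ⟨i, Nat.lt_of_succ_lt_succ hi⟩
    refine ⟨p, funext fun j => ?_⟩
    obtain rfl | hj := eq_or_ne j p.castSucc
    · exact h_left.trans (hurwitzMove_castSucc p t).symm
    obtain rfl | hj' := eq_or_ne j p.succ
    · exact h_right.trans (hurwitzMove_succ p t).symm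
    rw [hurwitzMove_of_ne hj hj']
    exact h_else j (fun h => hj (Fin.ext h)) (fun h => hj' (Fin.ext h))
  · rintro ⟨i, rfl⟩
    refine ⟨i, Nat.succ_lt_succ i.isLt, hurwitzMove_castSucc i t, hurwitzMove_succ i t, ?_⟩
    exact fun j hj hj' => hurwitzMove_of_ne (Fin.ne_of_val_ne hj) (Fin.ne_of_val_ne hj') t

theorem sameHurwitzOrbit_hurwitzMove (i : Fin n) (t : Fin (n + 1) → G) :
    SameHurwitzOrbit t (hurwitzMove i t) :=
  Relation.EqvGen.rel _ _ (isHurwitzMove_iff_exists_eq_hurwitzMove.mpr ⟨i, rfl⟩)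

theorem hurwitzMove_succ_eq_cons (i : Fin n) (t : Fin (n + 2) → G) :
    hurwitzMove i.succ t = Fin.cons (t 0) (hurwitzMove i (Fin.tail t)) := by
  funext j
  refine Fin.cases ?_ (fun j => ?_) j
  · exact hurwitzMove_of_ne (by simp [Fin.ext_iff]) (Fin.succ_ne_zero _).symm t
  · rw [Fin.cons_succ]
    obtain rfl | hj := eq_or_ne j i.castSucc
    · rw [hurwitzMove_castSucc, ← Fin.castSucc_succ, hurwitzMove_castSucc, Fin.tail]
    obtain rfl | hj' := eq_or_ne j i.succ
    · rw [hurwitzMove_succ, hurwitzMove_succ, Fin.tail, Fin.tail, Fin.castSucc_succ]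
    rw [hurwitzMove_of_ne hj hj', hurwitzMove_of_ne _ (by simpa using hj'), Fin.tail]
    rw [Fin.castSucc_succ]
    simpa using hj

theorem prod_ofFn_hurwitzMove (i : Fin n) (t : Fin (n + 1) → G) :
    (List.ofFn (hurwitzMove i t)).prod = (List.ofFn t).prod := by
  induction n with
  | zero => exact i.elim0
  | succ n ih =>
    refine Fin.cases ?_ (fun i => ?_) i
    · have h_tail (j : Fin n) : hurwitzMove 0 t j.succ.succ = t j.succ.succ :=
        hurwitzMove_of_ne (Fin.succ_ne_zero _) (by simp [Fin.ext_iff]) t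
      have h_zero : hurwitzMove 0 t 0 = t 1 := hurwitzMove_castSucc 0 t
      have h_one : hurwitzMove 0 t 1 = (t 1)⁻¹ * t 0 * t 1 := hurwitzMove_succ 0 t
      simp [List.ofFn_succ, h_tail, h_zero, h_one, mul_assoc]
    · rw [hurwitzMove_succ_eq_cons, List.ofFn_cons, List.prod_cons, ih, List.ofFn_succ (f := t),
        List.prod_cons]
      rfl

theorem isConj_hurwitzMove_swap (i : Fin n) (t : Fin (n + 1) → G) (j : Fin (n + 1)) :
    IsConj (t j) (hurwitzMove i t (Equiv.swap i.castSucc i.succ j)) := by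
  obtain rfl | hj := eq_or_ne j i.castSucc
  · rw [Equiv.swap_apply_left, hurwitzMove_succ]
    exact isConj_iff.mpr ⟨(t i.succ)⁻¹, by rw [inv_inv]⟩
  obtain rfl | hj' := eq_or_ne j i.succ
  · rw [Equiv.swap_apply_right, hurwitzMove_castSucc]
  · rw [Equiv.swap_apply_of_ne_of_ne hj hj', hurwitzMove_of_ne hj hj']

namespace SameHurwitzOrbit

variable {k : ℕ} {t t' : Fin k → G}

theorem map (φ : G →* H) (h : SameHurwitzOrbit t t') : SameHurwitzOrbit (φ ∘ t) (φ ∘ t') := by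
  induction h with
  | rel s s' h_move =>
    obtain ⟨i, hi, h_left, h_right, h_else⟩ := h_move
    refine Relation.EqvGen.rel _ _ ⟨i, hi, congrArg φ h_left, ?_, fun j hj hj' => ?_⟩
    · simp only [Function.comp_apply, h_right, map_mul, map_inv]
    · exact congrArg φ (h_else j hj hj')
  | refl s => exact refl _
  | symm s s' _ ih => exact ih.symm
  | trans s s' s'' _ _ ih ih' => exact ih.trans ih'

theorem of_map (φ : G ≃* H) (h : SameHurwitzOrbit (φ ∘ t) (φ ∘ t')) : SameHurwitzOrbit t t' := by
  have h_symm := h.map φ.symm.toMonoidHom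
  simpa [Function.comp_def] using h_symm

theorem prod_ofFn_eq (h : SameHurwitzOrbit t t') : (List.ofFn t).prod = (List.ofFn t').prod := by
  induction h with
  | rel s s' h_move =>
    cases k with
    | zero => rw [Subsingleton.elim s s']
    | succ n =>
      obtain ⟨i, rfl⟩ := isHurwitzMove_iff_exists_eq_hurwitzMove.mp h_move
      exact (prod_ofFn_hurwitzMove i s).symm
  | refl s => rfl
  | symm s s' _ ih => exact ih.symm
  | trans s s' s'' _ _ ih ih' => exact ih.trans ih'

theorem exists_perm_isConj (h : SameHurwitzOrbit t t') :
    ∃ σ : Equiv.Perm (Fin k), ∀ i, IsConj (t i) (t' (σ i)) := by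
  induction h with
  | rel s s' h_move =>
    cases k with
    | zero => exact ⟨1, fun i => i.elim0⟩
    | succ n =>
      obtain ⟨i, rfl⟩ := isHurwitzMove_iff_exists_eq_hurwitzMove.mp h_move
      exact ⟨_, isConj_hurwitzMove_swap i s⟩
  | refl s => exact ⟨1, fun i => IsConj.refl (s i)⟩
  | symm s s' _ ih =>
    obtain ⟨σ, hσ⟩ := ih
    exact ⟨σ⁻¹, fun i => by simpa using (hσ (σ⁻¹ i)).symm⟩
  | trans s s' s'' _ _ ih ih' =>
    obtain ⟨σ, hσ⟩ := ih
    obtain ⟨σ', hσ'⟩ := ih'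
    exact ⟨σ' * σ, fun i => (hσ i).trans (hσ' (σ i))⟩

end SameHurwitzOrbit

theorem exists_sameHurwitzOrbit_isConj {k : ℕ} (t : Fin k → G) (σ : Equiv.Perm (Fin k)) :
    ∃ s, SameHurwitzOrbit t s ∧ ∀ i, IsConj (t i) (s (σ i)) := by
  cases k with
  | zero => exact ⟨t, SameHurwitzOrbit.refl t, fun i => i.elim0⟩
  | succ n =>
    have hσ : σ ∈ Submonoid.closure
        (Set.range fun i : Fin n => Equiv.swap i.castSucc i.succ) := by
      rw [Equiv.Perm.mclosure_swap_castSucc_succ]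
      exact Submonoid.mem_top σ
    induction hσ using Submonoid.closure_induction generalizing t with
    | mem τ hτ =>
      obtain ⟨i, rfl⟩ := hτ
      exact ⟨_, sameHurwitzOrbit_hurwitzMove i t, isConj_hurwitzMove_swap i t⟩
    | one => exact ⟨t, SameHurwitzOrbit.refl t, fun i => IsConj.refl (t i)⟩
    | mul τ τ' _ _ ih ih' =>
      obtain ⟨s', h_orbit', h_conj'⟩ := ih' t
      obtain ⟨s, h_orbit, h_conj⟩ := ih s'
      exact ⟨s, h_orbit'.trans h_orbit, fun i => (h_conj' i).trans (h_conj (τ' i))⟩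

end Hurwitz

section Relations

variable {G : Type*} [Group G]

theorem mul_eq_mul_inv_pow_three_of_sq_eq {x y z : G} (hx : x ^ 2 = z) (hy : y ^ 2 = z)
    (hxy : (x * y) ^ 2 = z⁻¹) : y * x = x * y * z⁻¹ ^ 3 := by
  have hzy : Commute y z⁻¹ := hy ▸ (Commute.self_pow y 2).inv_right
  have hx_inv : x⁻¹ = x * z⁻¹ := by rw [← hx]; group
  have hy_inv : y⁻¹ = y * z⁻¹ := by rw [← hy]; group
  calc y * x = x⁻¹ * (x * y) ^ 2 * y⁻¹ := by rw [sq]; group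
    _ = x * z⁻¹ * z⁻¹ * (y * z⁻¹) := by rw [hxy, hx_inv, hy_inv]
    _ = x * y * z⁻¹ ^ 3 := by
      rw [mul_assoc x, mul_assoc x, ← mul_assoc (z⁻¹ * z⁻¹), ← (hzy.mul_right hzy).eq]
      group

theorem pow_six_eq_one_of_sq_eq {x y z : G} (hx : x ^ 2 = z) (hy : y ^ 2 = z)
    (hxy : (x * y) ^ 2 = z⁻¹) : z ^ 6 = 1 := by
  have hzx : Commute x (z⁻¹ ^ 3) := hx ▸ ((Commute.self_pow x 2).inv_right).pow_right 3
  have hzy : Commute y z := hy ▸ Commute.self_pow y 2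
  have h_conj : y * x * y⁻¹ = x * z⁻¹ ^ 3 := by
    rw [mul_eq_mul_inv_pow_three_of_sq_eq hx hy hxy, mul_assoc x,
      (hzy.inv_right.pow_right 3).eq]
    group
  have h_sq : z = z * (z⁻¹ ^ 3) ^ 2 := by
    calc z = y * z * y⁻¹ := by rw [hzy.eq, mul_inv_cancel_right]
      _ = (y * x * y⁻¹) ^ 2 := by rw [conj_pow, hx]
      _ = z * (z⁻¹ ^ 3) ^ 2 := by rw [h_conj, hzx.mul_pow, hx]
  rw [left_eq_mul, ← pow_mul, inv_pow, inv_eq_one] at h_sq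
  exact h_sq

/-- The defining relations of `G5`, for a pair of elements of an arbitrary group. -/
structure G5Relations (a b : G) : Prop where
  pow_three_left : a ^ 3 = 1
  pow_three_right : b ^ 3 = 1
  braid : a * b * a * b = b * a * b * a

/-- The words `a ^ i x ^ j y ^ k z ^ l` in `x = ab`, `y = ba` and the central element `z = x²`.
Under the relations of `G5`, the exponents matter modulo `3`, `2`, `2` (up to powers of `z`)
and `6`. -/
def normalWord (a b : G) (i j k l : ℕ) : G :=
  a ^ i * (a * b) ^ j * (b * a) ^ k * ((a * b) ^ 2) ^ l

/-- The `72` normal words with reduced exponents. -/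
def normalForm (a b : G) (q : Fin 3 × Fin 2 × Fin 2 × Fin 6) : G :=
  normalWord a b q.1 q.2.1 q.2.2.1 q.2.2.2

theorem pow_mul_normalWord_zero {a b : G} (i j k l : ℕ) :
    a ^ i * normalWord a b 0 j k l = normalWord a b i j k l := by
  simp only [normalWord, pow_zero, one_mul, mul_assoc]

theorem mul_mul_normalWord_zero {a b : G} (j k l : ℕ) :
    a * b * normalWord a b 0 j k l = normalWord a b 0 (j + 1) k l := by
  simp only [normalWord, pow_zero, one_mul, pow_succ' (a * b) j, mul_assoc]

theorem map_normalForm {H : Type*} [Group H] (φ : G →* H) (a b : G)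
    (q : Fin 3 × Fin 2 × Fin 2 × Fin 6) : φ (normalForm a b q) = normalForm (φ a) (φ b) q := by
  simp only [normalForm, normalWord, map_mul, map_pow]

namespace G5Relations

variable {a b : G}

theorem sq_mul_comm (h : G5Relations a b) : (b * a) ^ 2 = (a * b) ^ 2 := by
  simpa only [sq, mul_assoc] using h.braid.symm

theorem conj_left_eq_inv (h : G5Relations a b) : a⁻¹ * (b * a) * a = (a * b * (b * a))⁻¹ := by
  have ha : a * a = a⁻¹ := by rw [eq_inv_iff_mul_eq_one, ← h.pow_three_left, pow_three']
  have hb : b⁻¹ * b⁻¹ = b := by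
    rw [← _root_.mul_inv_rev, inv_eq_iff_mul_eq_one, ← h.pow_three_right, pow_three']
  calc a⁻¹ * (b * a) * a = a⁻¹ * b * (a * a) := by group
    _ = a⁻¹ * (b⁻¹ * b⁻¹) * a⁻¹ := by rw [ha, hb]
    _ = (a * b * (b * a))⁻¹ := by group

theorem commute_left (h : G5Relations a b) : Commute ((a * b) ^ 2) a := by
  have h_braid := congrArg (a * ·) h.braid
  simp only [Commute, SemiconjBy, sq, mul_assoc] at h_braid ⊢
  exact h_braid.symm

theorem sq_mul_swap (h : G5Relations a b) : (a * b * (b * a)) ^ 2 = ((a * b) ^ 2)⁻¹ := by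
  rw [← _root_.inv_inj, ← inv_pow, ← h.conj_left_eq_inv, inv_inv]
  calc (a⁻¹ * (b * a) * a) ^ 2 = a⁻¹ * (b * a) ^ 2 * a := by rw [sq, sq]; group
    _ = (a * b) ^ 2 := by rw [h.sq_mul_comm, mul_assoc, h.commute_left.eq, inv_mul_cancel_left]

theorem central_pow_six (h : G5Relations a b) : ((a * b) ^ 2) ^ 6 = 1 :=
  pow_six_eq_one_of_sq_eq rfl h.sq_mul_comm h.sq_mul_swap

theorem swap_mul_eq (h : G5Relations a b) :
    b * a * (a * b) = a * b * (b * a) * ((a * b) ^ 2) ^ 3 := by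
  rw [mul_eq_mul_inv_pow_three_of_sq_eq rfl h.sq_mul_comm h.sq_mul_swap, mul_right_inj, inv_pow,
    inv_eq_iff_mul_eq_one, ← pow_add, h.central_pow_six]

theorem swap_mul_left_eq (h : G5Relations a b) :
    b * a * a = a * (a * b) * (b * a) * (a * b) ^ 2 := by
  calc b * a * a = a * (a * b * (b * a))⁻¹ := by rw [← h.conj_left_eq_inv]; group
    _ = a * (a * b * (b * a)) * ((a * b * (b * a)) ^ 2)⁻¹ := by rw [sq]; group
    _ = _ := by rw [h.sq_mul_swap, inv_inv, mul_assoc a (a * b)]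

theorem swap_mul_pow_eq (h : G5Relations a b) (j : ℕ) :
    b * a * (a * b) ^ j = (a * b) ^ j * (b * a) * ((a * b) ^ 2) ^ (3 * j) := by
  induction j with
  | zero => simp
  | succ j ih =>
    have hz : Commute (a * b) (((a * b) ^ 2) ^ (3 * j)) :=
      (Commute.self_pow _ 2).pow_right _
    calc b * a * (a * b) ^ (j + 1)
      _ = (a * b) ^ j * (b * a) * ((a * b) ^ 2) ^ (3 * j) * (a * b) := by
        rw [pow_succ, ← mul_assoc, ih]
      _ = (a * b) ^ j * (b * a * (a * b)) * ((a * b) ^ 2) ^ (3 * j) := by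
        rw [mul_assoc _ _ (a * b), ← hz.eq]; simp only [mul_assoc]
      _ = _ := by
        rw [h.swap_mul_eq, mul_add_one, add_comm (3 * j), pow_add _ 3, pow_succ (a * b) j]
        simp only [mul_assoc]

theorem swap_mul_normalWord_zero (h : G5Relations a b) (j k l : ℕ) :
    b * a * normalWord a b 0 j k l = normalWord a b 0 j (k + 1) (3 * j + l) := by
  have hz : Commute (((a * b) ^ 2) ^ (3 * j)) ((b * a) ^ k) := by
    rw [← h.sq_mul_comm]
    exact ((Commute.pow_self _ 2).pow_left _).pow_right _
  simp only [normalWord, pow_zero, one_mul]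
  calc b * a * ((a * b) ^ j * (b * a) ^ k * ((a * b) ^ 2) ^ l)
    _ = (a * b) ^ j * (b * a) * (((a * b) ^ 2) ^ (3 * j) * (b * a) ^ k) * ((a * b) ^ 2) ^ l := by
      simp only [← mul_assoc, h.swap_mul_pow_eq j]
    _ = _ := by rw [hz.eq, pow_add _ (3 * j), pow_succ' (b * a) k]; simp only [mul_assoc]

theorem central_mul_normalWord_zero (h : G5Relations a b) (j k l : ℕ) :
    (a * b) ^ 2 * normalWord a b 0 j k l = normalWord a b 0 j k (l + 1) := by
  have hx : Commute ((a * b) ^ 2) ((a * b) ^ j) := (Commute.pow_self _ 2).pow_right j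
  have hy : Commute ((a * b) ^ 2) ((b * a) ^ k) := by
    rw [← h.sq_mul_comm]
    exact (Commute.pow_self _ 2).pow_right k
  simp only [normalWord, pow_zero, one_mul]
  rw [← mul_assoc, (hx.mul_right hy).eq, mul_assoc, ← pow_succ']

theorem exists_mul_normalWord_eq (h : G5Relations a b) (i j k l : ℕ) :
    ∃ i' j' k' l', b * normalWord a b i j k l = normalWord a b i' j' k' l' := by
  have h_mul_right : b = a ^ 2 * (a * b) := by
    rw [← mul_assoc, ← pow_succ, h.pow_three_left, one_mul]
  rw [← pow_mul_normalWord_zero, pow_eq_pow_mod i h.pow_three_left]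
  have h_mod : i % 3 = 0 ∨ i % 3 = 1 ∨ i % 3 = 2 := by omega
  rcases h_mod with h_mod | h_mod | h_mod <;> rw [h_mod]
  · refine ⟨2, j + 1, k, l, ?_⟩
    rw [pow_zero, one_mul, ← pow_mul_normalWord_zero 2, ← mul_mul_normalWord_zero, ← mul_assoc,
      ← h_mul_right]
  · refine ⟨0, j, k + 1, 3 * j + l, ?_⟩
    rw [pow_one, ← mul_assoc, h.swap_mul_normalWord_zero]
  · refine ⟨1, j + 1, k + 1, 3 * j + (l + 1), ?_⟩
    rw [sq, ← mul_assoc, ← mul_assoc, h.swap_mul_left_eq, mul_assoc, h.central_mul_normalWord_zero,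
      mul_assoc, h.swap_mul_normalWord_zero, mul_assoc, mul_mul_normalWord_zero,
      ← pow_mul_normalWord_zero 1, pow_one]

theorem exists_eq_normalWord (h : G5Relations a b) (h_gen : Subgroup.closure {a, b} = ⊤) (g : G) :
    ∃ i j k l, g = normalWord a b i j k l := by
  have h_inv {u : G} (hu : u ^ 3 = 1) : u⁻¹ = u * u := by
    rw [inv_eq_iff_mul_eq_one, ← hu, pow_three]
  have h_left (g : G) : (∃ i j k l, g = normalWord a b i j k l) →
      ∃ i j k l, a * g = normalWord a b i j k l := by
    rintro ⟨i, j, k, l, rfl⟩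
    exact ⟨i + 1, j, k, l, by simp only [normalWord, pow_succ' a, mul_assoc]⟩
  have h_right (g : G) : (∃ i j k l, g = normalWord a b i j k l) →
      ∃ i j k l, b * g = normalWord a b i j k l := by
    rintro ⟨i, j, k, l, rfl⟩
    exact h.exists_mul_normalWord_eq i j k l
  have hg : g ∈ Subgroup.closure {a, b} := h_gen ▸ Subgroup.mem_top g
  induction hg using Subgroup.closure_induction_left with
  | one => exact ⟨0, 0, 0, 0, by simp [normalWord]⟩
  | mul_left u hu v _ ih =>
    obtain rfl | rfl := hu
    exacts [h_left _ ih, h_right _ ih]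
  | inv_mul_cancel u hu v _ ih =>
    obtain rfl | rfl := hu
    · rw [h_inv h.pow_three_left, mul_assoc]
      exact h_left _ (h_left _ ih)
    · rw [h_inv h.pow_three_right, mul_assoc]
      exact h_right _ (h_right _ ih)

theorem normalWord_eq_normalWord_mod (h : G5Relations a b) (i j k l : ℕ) :
    normalWord a b i j k l =
      normalWord a b (i % 3) (j % 2) (k % 2) ((j / 2 + k / 2 + l) % 6) := by
  have hy : Commute (((a * b) ^ 2) ^ (j / 2)) ((b * a) ^ (k % 2)) := by
    rw [← h.sq_mul_comm]
    exact ((Commute.pow_self _ 2).pow_left _).pow_right _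
  have hx_pow : (a * b) ^ j = (a * b) ^ (j % 2) * ((a * b) ^ 2) ^ (j / 2) := by
    rw [← pow_mul, ← pow_add, Nat.mod_add_div]
  have hy_pow : (b * a) ^ k = (b * a) ^ (k % 2) * ((a * b) ^ 2) ^ (k / 2) := by
    rw [← h.sq_mul_comm, ← pow_mul, ← pow_add, Nat.mod_add_div]
  simp only [normalWord, ← pow_eq_pow_mod _ h.pow_three_left,
    ← pow_eq_pow_mod _ h.central_pow_six, pow_add _ _ l, pow_add _ (j / 2)]
  rw [hx_pow, hy_pow]
  simp only [mul_assoc]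
  rw [← mul_assoc (((a * b) ^ 2) ^ (j / 2)), hy.eq, mul_assoc]

theorem normalForm_surjective (h : G5Relations a b) (h_gen : Subgroup.closure {a, b} = ⊤) :
    Function.Surjective (normalForm a b) := by
  intro g
  obtain ⟨i, j, k, l, rfl⟩ := h.exists_eq_normalWord h_gen g
  exact ⟨(⟨i % 3, by omega⟩, ⟨j % 2, by omega⟩, ⟨k % 2, by omega⟩,
    ⟨(j / 2 + k / 2 + l) % 6, by omega⟩), (h.normalWord_eq_normalWord_mod i j k l).symm⟩

end G5Relations

end Relations

section Presentation

variable {G : Type*} [Group G]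

theorem g5Relations_ga_gb : G5Relations ga gb where
  pow_three_left := PresentedGroup.one_of_mem (rels := g5Rels) (by simp [g5Rels])
  pow_three_right := PresentedGroup.one_of_mem (rels := g5Rels) (by simp [g5Rels])
  braid := PresentedGroup.mk_eq_mk_of_mul_inv_mem (rels := g5Rels) (by simp [g5Rels])

theorem closure_ga_gb : Subgroup.closure {ga, gb} = ⊤ := by
  have h_range : Set.range (PresentedGroup.of (rels := g5Rels)) = {ga, gb} := by
    ext g
    simp [Fin.exists_fin_two, ga, gb, eq_comm]
  rw [← h_range, PresentedGroup.closure_range_of]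

namespace G5Relations

variable {a b : G}

/-- The homomorphism from `G5` sending `ga` and `gb` to elements satisfying its relations. -/
def lift (h : G5Relations a b) : G5 →* G :=
  PresentedGroup.toGroup (f := ![a, b]) (by
    rintro r (rfl | rfl | rfl)
    · simpa using h.pow_three_left
    · simpa using h.pow_three_right
    · rw [map_mul, map_inv, mul_inv_eq_one]
      simpa [mul_assoc] using h.braid)

theorem lift_ga (h : G5Relations a b) : h.lift ga = a := by simp [lift, ga]

theorem lift_gb (h : G5Relations a b) : h.lift gb = b := by simp [lift, gb]

end G5Relations

end Presentation

section Shear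

variable {R : Type*} [CommRing R]

/-- The transvection `p ↦ p + s • det(v, p) • v` of the plane with axis `v`. -/
def shear (s : R) (v : R × R) : SpecialLinearGroup (Fin 2) R :=
  ⟨!![1 - s * (v.1 * v.2), s * v.1 ^ 2; -(s * v.2 ^ 2), 1 + s * (v.1 * v.2)], by
    rw [det_fin_two_of]; ring⟩

/-- The image of the vector `p` under `shear s v`. -/
def shearVec (s : R) (v p : R × R) : R × R :=
  p + (s * (v.1 * p.2 - v.2 * p.1)) • v

/-- The first column of a `2 × 2` matrix, as a pair. -/
def firstColumn (m : SpecialLinearGroup (Fin 2) R) : R × R := (m 0 0, m 1 0)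

theorem firstColumn_shear_mul (s : R) (v : R × R) (m : SpecialLinearGroup (Fin 2) R) :
    firstColumn (shear s v * m) = shearVec s v (firstColumn m) := by
  have h_entry (i : Fin 2) :
      (shear s v * m) i 0 = shear s v i 0 * m 0 0 + shear s v i 1 * m 1 0 :=
    mul_apply.trans (Fin.sum_univ_two _)
  ext <;> simp only [firstColumn, h_entry] <;> simp [shear, shearVec] <;> ring

theorem firstColumn_prod_map_shear (l : List (R × R × R)) :
    firstColumn (l.map fun r => shear r.1 r.2).prod =
      l.foldr (fun r => shearVec r.1 r.2) (1, 0) := by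
  induction l with
  | nil => simp [firstColumn]
  | cons r l ih => rw [List.map_cons, List.prod_cons, firstColumn_shear_mul, ih, List.foldr_cons]

end Shear

section Model

/-- The group `C₃ × SL₂(𝔽₃)`, which is isomorphic to `G5`. -/
abbrev Model := Multiplicative (ZMod 3) × SpecialLinearGroup (Fin 2) (ZMod 3)

/-- Representatives of the four points of the projective line over `𝔽₃`. -/
def axis : Fin 4 → ZMod 3 × ZMod 3 := ![(1, 0), (0, 1), (1, 1), (1, 2)]

/-- The sign distinguishing the two classes of transvections in `SL₂(𝔽₃)`, for each of the
four classes of reflections. -/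
def classSign : Fin 4 → ZMod 3 := ![1, -1, -1, 1]

/-- The image in `Model` of the reflections of `G5`: the class `κ`, in the order
`S1, S2, S3, S4`, contains one reflection for each axis `v`. The `C₃` part counts the
generators `gb`. -/
def modelReflection (κ v : Fin 4) : Model :=
  (Multiplicative.ofAdd (![0, 1, 0, 2] κ), shear (classSign κ) (axis v))

theorem g5Relations_modelReflection : G5Relations (modelReflection 0 0) (modelReflection 1 1) where
  pow_three_left := by decide +kernel
  pow_three_right := by decide +kernel
  braid := by decide +kernel

theorem normalForm_modelReflection_surjective :
    Function.Surjective (normalForm (modelReflection 0 0) (modelReflection 1 1)) := by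
  unfold Function.Surjective
  decide +kernel

theorem lift_modelReflection_bijective : Function.Bijective g5Relations_modelReflection.lift := by
  have h_comp : g5Relations_modelReflection.lift ∘ normalForm ga gb =
      normalForm (modelReflection 0 0) (modelReflection 1 1) := by
    funext q
    rw [Function.comp_apply, map_normalForm, G5Relations.lift_ga, G5Relations.lift_gb]
  have h_card : Fintype.card (Fin 3 × Fin 2 × Fin 2 × Fin 6) = Fintype.card Model := by
    decide +kernel
  have h_bij := (Fintype.bijective_iff_surjective_and_card _).mpr
    ⟨normalForm_modelReflection_surjective, h_card⟩
  rw [← h_comp] at h_bij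
  exact ⟨h_bij.injective.of_comp_right (g5Relations_ga_gb.normalForm_surjective closure_ga_gb),
    h_bij.surjective.of_comp⟩

/-- The isomorphism `G5 ≃ C₃ × SL₂(𝔽₃)`. -/
def toModel : G5 ≃* Model :=
  MulEquiv.ofBijective g5Relations_modelReflection.lift lift_modelReflection_bijective

theorem toModel_ga : toModel ga = modelReflection 0 0 :=
  g5Relations_modelReflection.lift_ga

theorem toModel_gb : toModel gb = modelReflection 1 1 :=
  g5Relations_modelReflection.lift_gb

end Model

section Classes

/-- Representatives of the classes `S1, S2, S3, S4` of reflections. -/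
def classRep : Fin 4 → G5 := ![ga, gb, ga ^ 2, gb ^ 2]

theorem isReflection5_iff_exists_isConj {t : G5} :
    IsReflection5 t ↔ ∃ κ, IsConj (classRep κ) t := by
  simp [IsReflection5, S1, S2, S3, S4, classRep, Fin.exists_fin_succ]

theorem toModel_classRep (κ : Fin 4) :
    toModel (classRep κ) = modelReflection κ (![0, 1, 0, 1] κ) := by
  fin_cases κ
  · exact toModel_ga
  · exact toModel_gb
  · exact (map_pow toModel ga 2).trans (toModel_ga ▸ by decide +kernel)
  · exact (map_pow toModel gb 2).trans (toModel_gb ▸ by decide +kernel)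

theorem exists_mul_modelReflection_eq (κ : Fin 4) (x : Model) :
    ∃ v, x * modelReflection κ (![0, 1, 0, 1] κ) = modelReflection κ v * x := by
  revert κ x
  decide +kernel

theorem exists_toModel_eq_modelReflection {κ : Fin 4} {t : G5} (ht : IsConj (classRep κ) t) :
    ∃ v, toModel t = modelReflection κ v := by
  obtain ⟨g, hg⟩ := isConj_iff.mp ht
  obtain ⟨v, hv⟩ := exists_mul_modelReflection_eq κ (toModel g)
  refine ⟨v, ?_⟩
  rw [← hg, map_mul, map_mul, map_inv, toModel_classRep, hv, mul_inv_cancel_right]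

/-- The degree map from `G5` to its abelianization, counting generators `ga` and `gb`. -/
def degree : G5 →* Multiplicative (ZMod 3 × ZMod 3) :=
  G5Relations.lift (a := Multiplicative.ofAdd (1, 0)) (b := Multiplicative.ofAdd (0, 1))
    ⟨by decide, by decide, by decide⟩

/-- The common degree of the reflections in each of the four classes. -/
def classDegree : Fin 4 → ZMod 3 × ZMod 3 := ![(1, 0), (0, 1), (2, 0), (0, 2)]

theorem degree_classRep (κ : Fin 4) :
    degree (classRep κ) = Multiplicative.ofAdd (classDegree κ) := by
  fin_cases κ
  · exact G5Relations.lift_ga _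
  · exact G5Relations.lift_gb _
  · exact (map_pow degree ga 2).trans (congrArg (· ^ 2) (G5Relations.lift_ga _))
  · exact (map_pow degree gb 2).trans (congrArg (· ^ 2) (G5Relations.lift_gb _))

theorem degree_prod_eq_sum {k : ℕ} {κ : Fin k → Fin 4} {t : Fin k → G5}
    (ht : ∀ i, IsConj (classRep (κ i)) (t i)) :
    degree (List.ofFn t).prod = Multiplicative.ofAdd (∑ i, classDegree (κ i)) := by
  have h_class (i : Fin k) : degree (t i) = Multiplicative.ofAdd (classDegree (κ i)) := by
    rw [← degree_classRep]
    exact (isConj_iff_eq.mp (degree.map_isConj (ht i))).symm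
  rw [map_list_prod, List.map_ofFn, List.prod_ofFn, ofAdd_sum]
  exact Finset.prod_congr rfl fun i _ => h_class i

end Classes

section Coxeter

theorem exists_conj_eq_coxeter_of_pow_ne_one (m : Model) (h_four : m ^ 4 ≠ 1) (h_six : m ^ 6 ≠ 1) :
    ∃ x, x * m = modelReflection 0 0 * modelReflection 1 1 * x ∨
      x * m = (modelReflection 0 0 * modelReflection 1 1)⁻¹ * x := by
  revert m
  decide +kernel

theorem IsCoxeter5.exists_conj_eq {c : G5} (hc : IsCoxeter5 c) :
    ∃ g, g * c * g⁻¹ = ga * gb ∨ g * c * g⁻¹ = (ga * gb)⁻¹ := by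
  have h_pow {d : ℕ} (hd : ¬12 ∣ d) : toModel c ^ d ≠ 1 := by
    rwa [← map_pow, map_ne_one_iff toModel toModel.injective, Ne, ← orderOf_dvd_iff_pow_eq_one, hc]
  obtain ⟨x, hx⟩ := exists_conj_eq_coxeter_of_pow_ne_one (toModel c) (h_pow (by decide))
    (h_pow (by decide))
  obtain ⟨g, rfl⟩ := toModel.surjective x
  rw [← toModel_ga, ← toModel_gb, ← map_mul, ← map_mul, ← map_inv, ← map_mul, ← map_mul,
    toModel.apply_eq_iff_eq, toModel.apply_eq_iff_eq] at hx
  exact ⟨g, hx.imp mul_inv_eq_of_eq_mul mul_inv_eq_of_eq_mul⟩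

theorem IsCoxeter5.exists_degree_firstColumn_conj {c : G5} (hc : IsCoxeter5 c) :
    ∃ g, ∃ δ : ZMod 3, δ ≠ 0 ∧ degree (g * c * g⁻¹) = Multiplicative.ofAdd (δ, δ) ∧
      firstColumn (toModel (g * c * g⁻¹)).2 = δ • (2, 1) := by
  have h_degree : degree (ga * gb) = Multiplicative.ofAdd (1, 1) := by
    rw [map_mul]
    exact congrArg₂ (· * ·) (degree_classRep 0) (degree_classRep 1)
  obtain ⟨g, hg | hg⟩ := hc.exists_conj_eq
  · refine ⟨g, 1, by decide, by rw [hg, h_degree], ?_⟩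
    rw [hg, map_mul, toModel_ga, toModel_gb]
    decide +kernel
  · refine ⟨g, -1, by decide, by rw [hg, map_inv, h_degree]; rfl, ?_⟩
    rw [hg, map_inv, map_mul, toModel_ga, toModel_gb]
    decide +kernel

end Coxeter

section Twist

/-- The action of `(modelReflection κ v)⁻¹` on the four axes. -/
def rotate (κ v : Fin 4) : Fin 4 → Fin 4 :=
  let r : Fin 4 → Fin 4 := ![![0, 3, 1, 2], ![2, 1, 3, 0], ![3, 0, 2, 1], ![1, 2, 0, 3]] v
  ![r, r ∘ r, r ∘ r, r] κ

theorem modelReflection_conj (κ v κ' u : Fin 4) :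
    (modelReflection κ v)⁻¹ * modelReflection κ' u * modelReflection κ v =
      modelReflection κ' (rotate κ v u) := by
  revert κ v κ' u
  decide +kernel

/-- The tuple of reflections with classes `κ` and axes `e`. -/
def reflectionTuple {k : ℕ} (κ e : Fin k → Fin 4) : Fin k → Model :=
  fun i => modelReflection (κ i) (e i)

/-- The first column of the `SL₂(𝔽₃)` part of the product of `reflectionTuple κ e`, computed
without multiplying matrices. -/
def columnProd {k : ℕ} (κ e : Fin k → Fin 4) : ZMod 3 × ZMod 3 :=
  (List.ofFn fun i => (classSign (κ i), axis (e i))).foldr (fun r => shearVec r.1 r.2) (1, 0)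

theorem firstColumn_prod_reflectionTuple {k : ℕ} (κ e : Fin k → Fin 4) :
    firstColumn (List.ofFn (reflectionTuple κ e)).prod.2 = columnProd κ e := by
  rw [columnProd, ← firstColumn_prod_map_shear, List.map_ofFn,
    ← MonoidHom.coe_snd, map_list_prod, List.map_ofFn]
  rfl

variable {n : ℕ}

/-- The effect on axes of performing the `i`-th Hurwitz move twice on a tuple of reflections
with classes `κ`. The classes are unchanged. -/
def twist (κ : Fin (n + 1) → Fin 4) (i : Fin n) (e : Fin (n + 1) → Fin 4) : Fin (n + 1) → Fin 4 :=
  let v := rotate (κ i.succ) (e i.succ) (e i.castSucc)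
  Function.update (Function.update e i.castSucc v) i.succ (rotate (κ i.castSucc) v (e i.succ))

theorem reflectionTuple_twist (κ : Fin (n + 1) → Fin 4) (i : Fin n) (e : Fin (n + 1) → Fin 4) :
    reflectionTuple κ (twist κ i e) = hurwitzMove i (hurwitzMove i (reflectionTuple κ e)) := by
  funext j
  obtain rfl | hj := eq_or_ne j i.castSucc
  · simp [hurwitzMove_castSucc, hurwitzMove_succ, reflectionTuple, modelReflection_conj, twist,
      Function.update_of_ne i.castSucc_lt_succ.ne]
  obtain rfl | hj' := eq_or_ne j i.succ
  · simp [hurwitzMove_castSucc, hurwitzMove_succ, reflectionTuple, modelReflection_conj, twist]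
  · simp [hurwitzMove_of_ne hj hj', reflectionTuple, twist, hj, hj']

/-- Enlarge a set of axis tuples by one round of twists, each applied in turn to everything
found so far. -/
def saturate (κ : Fin (n + 1) → Fin 4) (s : Finset (Fin (n + 1) → Fin 4)) :
    Finset (Fin (n + 1) → Fin 4) :=
  (List.finRange n).foldl (fun s i => s ∪ s.image (twist κ i)) s

theorem sameHurwitzOrbit_of_mem_saturate {κ : Fin (n + 1) → Fin 4} {t : Fin (n + 1) → Model}
    {s : Finset (Fin (n + 1) → Fin 4)}
    (hs : ∀ e ∈ s, SameHurwitzOrbit t (reflectionTuple κ e)) :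
    ∀ e ∈ saturate κ s, SameHurwitzOrbit t (reflectionTuple κ e) := by
  refine List.foldlRecOn (motive := fun s => ∀ e ∈ s, SameHurwitzOrbit t (reflectionTuple κ e))
    _ _ hs fun s hs i _ e he => ?_
  obtain he | he := Finset.mem_union.mp he
  · exact hs e he
  · obtain ⟨e', he', rfl⟩ := Finset.mem_image.mp he
    rw [reflectionTuple_twist]
    exact (hs e' he').trans <|
      (sameHurwitzOrbit_hurwitzMove i _).trans (sameHurwitzOrbit_hurwitzMove i _)

theorem sameHurwitzOrbit_of_mem_iterate_saturate {κ b e : Fin (n + 1) → Fin 4} {m : ℕ}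
    (he : e ∈ (saturate κ)^[m] {b}) :
    SameHurwitzOrbit (reflectionTuple κ b) (reflectionTuple κ e) := by
  induction m generalizing e with
  | zero =>
    rw [Finset.mem_singleton.mp he]
    exact SameHurwitzOrbit.refl _
  | succ m ih =>
    rw [Function.iterate_succ_apply'] at he
    exact sameHurwitzOrbit_of_mem_saturate (fun _ => ih) e he

end Twist

section Patterns

set_option synthInstance.maxSize 256

variable {δ : ZMod 3}

theorem sum_classDegree_ne_of_length_one (hδ : δ ≠ 0) (κ : Fin 1 → Fin 4) :
    ∑ i, classDegree (κ i) ≠ (δ, δ) := by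
  revert δ κ
  decide +kernel

theorem pattern_mem_of_length_two (hδ : δ ≠ 0) {κ : Fin 2 → Fin 4} (hκ : Monotone κ)
    (h_degree : ∑ i, classDegree (κ i) = (δ, δ)) : (δ, κ) ∈ [(1, ![0, 1]), (2, ![2, 3])] := by
  revert δ κ
  decide +kernel

theorem pattern_mem_of_length_three (hδ : δ ≠ 0) {κ : Fin 3 → Fin 4} (hκ : Monotone κ)
    (h_degree : ∑ i, classDegree (κ i) = (δ, δ)) :
    (δ, κ) ∈ [(1, ![0, 3, 3]), (1, ![1, 2, 2]), (2, ![0, 0, 3]), (2, ![1, 1, 2])] := by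
  revert δ κ
  decide +kernel

theorem pattern_mem_of_length_four (hδ : δ ≠ 0) {κ : Fin 4 → Fin 4} (hκ : Monotone κ)
    (h_degree : ∑ i, classDegree (κ i) = (δ, δ)) :
    (δ, κ) ∈ [(1, ![0, 0, 1, 2]), (1, ![0, 1, 1, 3]), (1, ![2, 2, 3, 3]),
      (2, ![0, 0, 1, 1]), (2, ![0, 2, 2, 3]), (2, ![1, 2, 3, 3])] := by
  revert δ κ
  decide +kernel

/-- All factorizations of a standard Coxeter element of degree `(δ, δ)` with classes `κ` are
reached by twists from a single one. Of the product only the first column is recorded, which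
suffices to detect the Coxeter element among the products with classes `κ`. Four rounds of
saturation are enough for tuples of length at most four. -/
def TwistTransitive {n : ℕ} (δ : ZMod 3) (κ : Fin (n + 1) → Fin 4) : Prop :=
  ∃ b, ∀ e, columnProd κ e = δ • (2, 1) → e ∈ (saturate κ)^[4] {b}

theorem twistTransitive_of_length_two (hδ : δ ≠ 0) {κ : Fin 2 → Fin 4} (hκ : Monotone κ)
    (h_degree : ∑ i, classDegree (κ i) = (δ, δ)) : TwistTransitive δ κ := by
  have h_mem := pattern_mem_of_length_two hδ hκ h_degree
  simp only [List.mem_cons, List.not_mem_nil, or_false, Prod.mk.injEq] at h_mem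
  obtain ⟨rfl, rfl⟩ | ⟨rfl, rfl⟩ := h_mem
  · exact ⟨![0, 1], by decide +kernel⟩
  · exact ⟨![0, 2], by decide +kernel⟩

theorem twistTransitive_of_length_three (hδ : δ ≠ 0) {κ : Fin 3 → Fin 4} (hκ : Monotone κ)
    (h_degree : ∑ i, classDegree (κ i) = (δ, δ)) : TwistTransitive δ κ := by
  have h_mem := pattern_mem_of_length_three hδ hκ h_degree
  simp only [List.mem_cons, List.not_mem_nil, or_false, Prod.mk.injEq] at h_mem
  obtain ⟨rfl, rfl⟩ | ⟨rfl, rfl⟩ | ⟨rfl, rfl⟩ | ⟨rfl, rfl⟩ := h_mem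
  · exact ⟨![0, 1, 1], by decide +kernel⟩
  · exact ⟨![0, 1, 3], by decide +kernel⟩
  · exact ⟨![0, 2, 3], by decide +kernel⟩
  · exact ⟨![0, 2, 2], by decide +kernel⟩

theorem twistTransitive_of_length_four (hδ : δ ≠ 0) {κ : Fin 4 → Fin 4} (hκ : Monotone κ)
    (h_degree : ∑ i, classDegree (κ i) = (δ, δ)) : TwistTransitive δ κ := by
  have h_mem := pattern_mem_of_length_four hδ hκ h_degree
  simp only [List.mem_cons, List.not_mem_nil, or_false, Prod.mk.injEq] at h_mem
  obtain ⟨rfl, rfl⟩ | ⟨rfl, rfl⟩ | ⟨rfl, rfl⟩ | ⟨rfl, rfl⟩ | ⟨rfl, rfl⟩ | ⟨rfl, rfl⟩ := h_mem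
  · exact ⟨![0, 2, 0, 2], by decide +kernel⟩
  · exact ⟨![0, 2, 1, 0], by decide +kernel⟩
  · exact ⟨![0, 1, 3, 3], by decide +kernel⟩
  · exact ⟨![0, 1, 0, 3], by decide +kernel⟩
  · exact ⟨![0, 2, 0, 1], by decide +kernel⟩
  · exact ⟨![0, 1, 0, 1], by decide +kernel⟩

theorem twistTransitive_of_length_le_four {n : ℕ} (hn : n + 1 ≤ 4) (hδ : δ ≠ 0)
    {κ : Fin (n + 1) → Fin 4} (hκ : Monotone κ)
    (h_degree : ∑ i, classDegree (κ i) = (δ, δ)) : TwistTransitive δ κ := by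
  match n with
  | 0 => exact absurd h_degree (sum_classDegree_ne_of_length_one hδ κ)
  | 1 => exact twistTransitive_of_length_two hδ hκ h_degree
  | 2 => exact twistTransitive_of_length_three hδ hκ h_degree
  | 3 => exact twistTransitive_of_length_four hδ hκ h_degree

end Patterns

section Factorizations

theorem sameHurwitzOrbit_of_isConj_classRep_of_monotone {n : ℕ} {δ : ZMod 3} {c : G5}
    {κ : Fin (n + 1) → Fin 4} {t t' : Fin (n + 1) → G5} (hn : n + 1 ≤ 4) (hδ : δ ≠ 0)
    (h_degree : degree c = Multiplicative.ofAdd (δ, δ))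
    (h_column : firstColumn (toModel c).2 = δ • (2, 1)) (hκ : Monotone κ)
    (ht : ∀ i, IsConj (classRep (κ i)) (t i)) (ht' : ∀ i, IsConj (classRep (κ i)) (t' i))
    (hp : (List.ofFn t).prod = c) (hp' : (List.ofFn t').prod = c) : SameHurwitzOrbit t t' := by
  have h_sum : ∑ i, classDegree (κ i) = (δ, δ) := by
    rw [← hp, degree_prod_eq_sum ht] at h_degree
    exact Multiplicative.ofAdd.injective h_degree
  obtain ⟨b, hb⟩ := twistTransitive_of_length_le_four hn hδ hκ h_sum
  have h_base {s : Fin (n + 1) → G5} (hs : ∀ i, IsConj (classRep (κ i)) (s i))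
      (h_prod : (List.ofFn s).prod = c) :
      SameHurwitzOrbit (reflectionTuple κ b) (toModel ∘ s) := by
    choose e he using fun i => exists_toModel_eq_modelReflection (hs i)
    have h_tuple : toModel ∘ s = reflectionTuple κ e := funext he
    have h_model : (List.ofFn (reflectionTuple κ e)).prod = toModel c := by
      rw [← h_tuple, ← List.map_ofFn, ← map_list_prod, h_prod]
    rw [h_tuple]
    refine sameHurwitzOrbit_of_mem_iterate_saturate (hb e ?_)
    rw [← firstColumn_prod_reflectionTuple, h_model, h_column]
  exact ((h_base ht hp).symm.trans (h_base ht' hp')).of_map toModel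

theorem IsCoxeter5.sameHurwitzOrbit_of_monotone {n : ℕ} {c : G5} (hc : IsCoxeter5 c)
    (hn : n + 1 ≤ 4) {κ : Fin (n + 1) → Fin 4} {t t' : Fin (n + 1) → G5} (hκ : Monotone κ)
    (ht : ∀ i, IsConj (classRep (κ i)) (t i)) (ht' : ∀ i, IsConj (classRep (κ i)) (t' i))
    (hp : (List.ofFn t).prod = c) (hp' : (List.ofFn t').prod = c) : SameHurwitzOrbit t t' := by
  obtain ⟨g, δ, hδ, h_degree, h_column⟩ := hc.exists_degree_firstColumn_conj
  have h_conj (s : G5) : IsConj s (MulAut.conj g s) := isConj_iff.mpr ⟨g, rfl⟩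
  have h_prod {s : Fin (n + 1) → G5} (hs : (List.ofFn s).prod = c) :
      (List.ofFn (MulAut.conj g ∘ s)).prod = g * c * g⁻¹ := by
    rw [← List.map_ofFn, ← map_list_prod, hs, MulAut.conj_apply]
  refine SameHurwitzOrbit.of_map (MulAut.conj g) ?_
  exact sameHurwitzOrbit_of_isConj_classRep_of_monotone hn hδ h_degree h_column hκ
    (fun i => (ht i).trans (h_conj _)) (fun i => (ht' i).trans (h_conj _)) (h_prod hp) (h_prod hp')

theorem IsCoxeter5.sameHurwitzOrbit_of_perm_isConj {k : ℕ} {c : G5} (hc : IsCoxeter5 c)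
    (hk : k ≤ 4) {t t' : Fin k → G5} (ht : ∀ i, IsReflection5 (t i))
    (hp : (List.ofFn t).prod = c) (hp' : (List.ofFn t').prod = c)
    {σ : Equiv.Perm (Fin k)} (hσ : ∀ i, IsConj (t i) (t' (σ i))) : SameHurwitzOrbit t t' := by
  cases k with
  | zero => rw [Subsingleton.elim t t']; exact SameHurwitzOrbit.refl t'
  | succ n =>
    choose κ hκ using fun i => isReflection5_iff_exists_isConj.mp (ht i)
    let π := Tuple.sort κ
    obtain ⟨s, h_orbit, hs⟩ := exists_sameHurwitzOrbit_isConj t π⁻¹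
    obtain ⟨s', h_orbit', hs'⟩ := exists_sameHurwitzOrbit_isConj t' (π⁻¹ * σ⁻¹)
    have h_sorted (j) : IsConj (classRep (κ (π j))) (s j) := by
      simpa using (hκ (π j)).trans (hs (π j))
    have h_sorted' (j) : IsConj (classRep (κ (π j))) (s' j) := by
      simpa using ((hκ (π j)).trans (hσ (π j))).trans (hs' (σ (π j)))
    have h_mid : SameHurwitzOrbit s s' :=
      hc.sameHurwitzOrbit_of_monotone hk (Tuple.monotone_sort κ) h_sorted h_sorted'
        (h_orbit.prod_ofFn_eq.symm.trans hp) (h_orbit'.prod_ofFn_eq.symm.trans hp')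
    exact (h_orbit.trans h_mid).trans h_orbit'.symm

end Factorizations

theorem g5_short_factorizations (c : G5) (hc : IsCoxeter5 c) (k : ℕ) (hk : k ≤ 4)
    (t t' : Fin k → G5)
    (ht : ∀ i, IsReflection5 (t i)) (ht' : ∀ i, IsReflection5 (t' i))
    (hp : (List.ofFn t).prod = c) (hp' : (List.ofFn t').prod = c) :
    SameHurwitzOrbit t t' ↔
      ∃ σ : Equiv.Perm (Fin k), ∀ i, IsConj (t i) (t' (σ i)) :=
  ⟨SameHurwitzOrbit.exists_perm_isConj,
    fun ⟨_, hσ⟩ => hc.sameHurwitzOrbit_of_perm_isConj hk ht hp hp' hσ⟩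
end
end
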